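/- arXiv:1301.6419 — 2 statements merged into one kernel-verified Lean document; each statement's English description precedes it below -/
import Mathlib

section
/- Let 𝔛 be a class of groups that is closed under isomorphism, quotients and extensions, let G be a group and let H be a normal subgroup of finite index in G. Suppose that for some integer c ≥ 0, every ascending chain (K_i)_{i∈ℕ} of normal subgroups of G (with K_{i-1} ≤ K_i for all i) has at most c indices i for which the factor K_i/K_{i-1} is not in 𝔛. Then every ascending chain of normal subgroups of H has at most c·2^{|G:H|−1} factors that are not in 𝔛. -/
/-!  Common definitions: rooted trees of type `(m n)`, tree automorphisms,
rigid stabilizers, branch groups, and auxiliary notions. -/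

universe u

/-- Vertices of the rooted tree of type `m`: finite sequences `(x_0, …, x_{n-1})`
with `x_i ∈ {1, …, m i}` (encoded as `Fin (m i)`). -/
def Vertex (m : ℕ → ℕ) : Type := Σ n : ℕ, ∀ i : Fin n, Fin (m i)

namespace Vertex

variable {m : ℕ → ℕ}

/-- The level of a vertex: its length. -/
def level (v : Vertex m) : ℕ := v.1

/-- `v` is a (weak) prefix of `w`; i.e. `w` lies in the subtree `T_v`
(`w = v` or `w` is a descendant of `v`). -/
def IsPrefix (v w : Vertex m) : Prop :=
  ∃ h : v.1 ≤ w.1, ∀ i : Fin v.1, w.2 (Fin.castLE h i) = v.2 i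

/-- `w` is a child (one-step extension) of `v`. -/
def IsChild (v w : Vertex m) : Prop := w.1 = v.1 + 1 ∧ IsPrefix v w

end Vertex

/-- The `n`-th layer `L_n` of the tree: all vertices of level `n`. -/
def layer (m : ℕ → ℕ) (n : ℕ) : Set (Vertex m) := {v | v.1 = n}

section Rist

variable {m : ℕ → ℕ} (G : Type*) [Group G] [MulAction G (Vertex m)]

/-- The rigid stabilizer of a vertex `v`: all elements fixing every vertex
outside the subtree `T_v`. -/
def rist (v : Vertex m) : Subgroup G :=
  ⨅ w ∈ {w : Vertex m | ¬ Vertex.IsPrefix v w}, MulAction.stabilizer G w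

/-- The subgroup generated by the rigid stabilizers of the vertices in `X`. -/
def ristSet (X : Set (Vertex m)) : Subgroup G := ⨆ v ∈ X, rist G v

/-- `rist_G(n)`, the rigid stabilizer of the `n`-th layer. -/
def ristLayer (m : ℕ → ℕ) (G : Type*) [Group G] [MulAction G (Vertex m)] (n : ℕ) :
    Subgroup G :=
  ristSet G (layer m n)

/-- The orbit of the vertex `v` under a subgroup `H ≤ G`. -/
def subOrbit (H : Subgroup G) (v : Vertex m) : Set (Vertex m) :=
  {w | ∃ h ∈ H, h • v = w}

/-- The set of orbits of a subgroup `H ≤ G` on a set `X` of vertices. -/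
def orbitsOn (H : Subgroup G) (X : Set (Vertex m)) : Set (Set (Vertex m)) :=
  (fun v => subOrbit G H v) '' X

end Rist

/-- `G` is a branch group on the rooted tree of type `m` (with respect to the given
action): the action is faithful and by tree automorphisms, `G` acts transitively on
each layer, and each `rist_G(n)` has finite index in `G`. -/
structure IsBranchGroup (m : ℕ → ℕ) (G : Type*) [Group G] [MulAction G (Vertex m)] :
    Prop where
  faithful : ∀ g : G, (∀ v : Vertex m, g • v = v) → g = 1
  aut : ∀ (g : G) (v w : Vertex m), Vertex.IsChild v w ↔ Vertex.IsChild (g • v) (g • w)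
  trans : ∀ v w : Vertex m, v.1 = w.1 → ∃ g : G, g • v = w
  ristFiniteIndex : ∀ n : ℕ, (ristLayer m G n).FiniteIndex

/-- A group is virtually soluble if it has a soluble subgroup of finite index. -/
def VirtuallySolvable (Γ : Type*) [Group Γ] : Prop :=
  ∃ S : Subgroup Γ, S.FiniteIndex ∧ IsSolvable ↥S

/-- A group is virtually abelian if it has an abelian subgroup of finite index. -/
def VirtuallyAbelian (Γ : Type*) [Group Γ] : Prop :=
  ∃ S : Subgroup Γ, S.FiniteIndex ∧ ∀ a ∈ S, ∀ b ∈ S, a * b = b * a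

/-- For subgroups `A ≤ B` of a group with `A` normalised by `B`, this says that the
factor `B/A` belongs to the class `𝔛`. -/
def FactorIn (𝔛 : (Γ : Type u) → [inst : Group Γ] → Prop) {G : Type u} [Group G]
    (A B : Subgroup G) : Prop :=
  ∃ hn : (A.subgroupOf B).Normal, letI := hn; 𝔛 (↥B ⧸ A.subgroupOf B)

/-- The factor `B/A` is virtually soluble. -/
def FactorVirtuallySolvable {G : Type*} [Group G] (A B : Subgroup G) : Prop :=
  ∃ hn : (A.subgroupOf B).Normal,
    letI := hn; VirtuallySolvable (↥B ⧸ A.subgroupOf B)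

/-- The factor `B/A` is virtually abelian. -/
def FactorVirtuallyAbelian {G : Type*} [Group G] (A B : Subgroup G) : Prop :=
  ∃ hn : (A.subgroupOf B).Normal,
    letI := hn; VirtuallyAbelian (↥B ⧸ A.subgroupOf B)

/-- `Γ` has `r` infinite normal subgroups that generate their direct product in `Γ`:
each of them intersects trivially the subgroup generated by the others. -/
def HasIndepFamily (Γ : Type*) [Group Γ] (r : ℕ) : Prop :=
  ∃ N : Fin r → Subgroup Γ, (∀ i, (N i).Normal) ∧ (∀ i, Infinite ↥(N i)) ∧
    ∀ i, N i ⊓ (⨆ j ∈ ({i}ᶜ : Set (Fin r)), N j) = ⊥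

/-!
Write `J A N` for the join of the translates `σ a • N`, `a ∈ A`, of a normal subgroup `N` of a group
under a family `σ` of its automorphisms, and put `A' = A ∪ {b}`. For `N ≤ M`, let `Z` and `W` be the
parts of `N` and `M` that `σ b` moves into `J A N` and `J A M`. By modularity, `J A M / J A N` has a
normal subgroup that is a quotient of `J A' W / J A' Z`, and the quotient by it is a quotient of
`J A' M / J A' N`. Hence passing from `A'` to `A` at most doubles the number of factors outside the
class. If `A` is a transversal of `H` in `G`, acting by conjugation, then `J A N` is normal in `G`
and the bound is `c`. Choose a transversal containing `1` and remove its other `|G : H| - 1`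
elements one at a time: this leaves `J {1} N = N`.
-/

open scoped Pointwise

theorem sup_inf_assoc_of_le_of_normal {Γ : Type*} [Group Γ] {A B M : Subgroup Γ} [B.Normal]
    (hAM : A ≤ M) : (A ⊔ B) ⊓ M = A ⊔ B ⊓ M := by
  refine le_antisymm ?_ (le_inf (sup_le_sup_left inf_le_left A) (sup_le hAM inf_le_right))
  rintro x ⟨hx, hxM⟩
  obtain ⟨a, ha, b, hb, rfl⟩ := Subgroup.mem_sup_of_normal_right.1 hx
  exact Subgroup.mul_mem_sup ha ⟨hb, (Subgroup.mul_mem_cancel_left M (hAM ha)).1 hxM⟩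

section ClassClosure

/-- The class `𝔛` is closed under isomorphism and under quotients, expressed together as closure
under surjective homomorphic images. -/
def ClosedUnderImages (𝔛 : (Γ : Type u) → [Group Γ] → Prop) : Prop :=
  ∀ ⦃Γ₁ Γ₂ : Type u⦄ [Group Γ₁] [Group Γ₂] (f : Γ₁ →* Γ₂), Function.Surjective f → 𝔛 Γ₁ → 𝔛 Γ₂

/-- The class `𝔛` contains every extension of one of its members by another. -/
def ClosedUnderExtensions (𝔛 : (Γ : Type u) → [Group Γ] → Prop) : Prop :=
  ∀ (Γ : Type u) [Group Γ] (N : Subgroup Γ) [N.Normal], 𝔛 ↥N → 𝔛 (Γ ⧸ N) → 𝔛 Γ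

theorem ClosedUnderImages.of_iso_of_quotient {𝔛 : (Γ : Type u) → [Group Γ] → Prop}
    (hiso : ∀ (Γ₁ Γ₂ : Type u) [Group Γ₁] [Group Γ₂], Nonempty (Γ₁ ≃* Γ₂) → 𝔛 Γ₁ → 𝔛 Γ₂)
    (hquot : ∀ (Γ : Type u) [Group Γ] (N : Subgroup Γ) [N.Normal], 𝔛 Γ → 𝔛 (Γ ⧸ N)) :
    ClosedUnderImages 𝔛 := fun Γ₁ _ _ _ f hf hΓ₁ =>
  hiso _ _ ⟨QuotientGroup.quotientKerEquivOfSurjective f hf⟩ (hquot Γ₁ f.ker hΓ₁)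

end ClassClosure

namespace FactorIn

variable {𝔛 : (Γ : Type u) → [Group Γ] → Prop} {Γ Δ : Type u} [Group Γ] [Group Δ]

theorem of_surjective (h𝔛 : ClosedUnderImages 𝔛) {A B : Subgroup Γ} (h : FactorIn 𝔛 A B)
    (f : ↥B →* Δ) (hf : Function.Surjective f) (hker : A.subgroupOf B ≤ f.ker) : 𝔛 Δ := by
  obtain ⟨_, hfactor⟩ := h
  exact h𝔛 (QuotientGroup.lift (A.subgroupOf B) f hker)
    (QuotientGroup.lift_surjective_of_surjective _ _ hf _) hfactor

theorem of_inf_le (h𝔛 : ClosedUnderImages 𝔛) {A B C : Subgroup Γ} [(C.subgroupOf B).Normal]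
    (hle : A ⊓ B ≤ C) (h : FactorIn 𝔛 A B) : FactorIn 𝔛 C B := by
  refine ⟨inferInstance, h.of_surjective h𝔛 (QuotientGroup.mk' _)
    (QuotientGroup.mk'_surjective _) fun x hx => ?_⟩
  exact (QuotientGroup.eq_one_iff x).2 (hle ⟨hx, x.2⟩)

theorem sup_right_iff (h𝔛 : ClosedUnderImages 𝔛) {N B : Subgroup Γ} [N.Normal] :
    FactorIn 𝔛 N (B ⊔ N) ↔ FactorIn 𝔛 N B := by
  let e := QuotientGroup.quotientInfEquivProdNormalQuotient B N
  exact ⟨fun ⟨_, h⟩ => ⟨inferInstance, h𝔛 e.symm.toMonoidHom e.symm.surjective h⟩,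
    fun ⟨_, h⟩ => ⟨inferInstance, h𝔛 e.toMonoidHom e.surjective h⟩⟩

theorem trans (h𝔛 : ClosedUnderImages 𝔛) (hext : ClosedUnderExtensions 𝔛) {A B C : Subgroup Γ}
    [(A.subgroupOf C).Normal] (hle : B ≤ C) (hAB : FactorIn 𝔛 A B) (hBC : FactorIn 𝔛 B C) :
    FactorIn 𝔛 A C := by
  have : (B.subgroupOf C).Normal := hBC.1
  let π := QuotientGroup.mk' (A.subgroupOf C)
  have hπ : Function.Surjective π := QuotientGroup.mk'_surjective _
  have : ((B.subgroupOf C).map π).Normal := Subgroup.Normal.map ‹_› π hπ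
  refine ⟨inferInstance, hext _ ((B.subgroupOf C).map π) ?_ ?_⟩
  · let e := Subgroup.subgroupOfEquivOfLe hle
    refine hAB.of_surjective h𝔛 ((π.subgroupMap _).comp e.symm.toMonoidHom)
      ((π.subgroupMap_surjective _).comp e.symm.surjective) fun x hx => ?_
    exact Subtype.ext ((QuotientGroup.eq_one_iff _).2 hx)
  · refine hBC.of_surjective h𝔛 ((QuotientGroup.mk' ((B.subgroupOf C).map π)).comp π)
      ((QuotientGroup.mk'_surjective _).comp hπ) fun x hx => ?_
    exact (QuotientGroup.eq_one_iff _).2 (Subgroup.mem_map_of_mem π hx)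

theorem of_map (h𝔛 : ClosedUnderImages 𝔛) {A B : Subgroup Γ} [(A.subgroupOf B).Normal]
    {f : Γ →* Δ} (hf : Function.Injective f) (h : FactorIn 𝔛 (A.map f) (B.map f)) :
    FactorIn 𝔛 A B := by
  let e := B.equivMapOfInjective f hf
  refine ⟨inferInstance, h.of_surjective h𝔛 ((QuotientGroup.mk' _).comp e.symm.toMonoidHom)
    ((QuotientGroup.mk'_surjective _).comp e.symm.surjective) fun x hx => ?_⟩
  obtain ⟨y, rfl⟩ := e.surjective x
  obtain ⟨a, ha, hay⟩ : ∃ a ∈ A, f a = f y := hx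
  obtain rfl : a = y := hf hay
  simpa [Subgroup.mem_subgroupOf] using ha

theorem of_sup_of_inf_le (h𝔛 : ClosedUnderImages 𝔛) {L M L' M' C : Subgroup Γ} [L.Normal]
    [M'.Normal] [C.Normal] (hLM : L ≤ M) (hLM' : L' ≤ M') (hLC : L ≤ C) (hinf : M' ⊓ M ≤ C)
    (h : FactorIn 𝔛 (L ⊔ L') (M ⊔ M')) : FactorIn 𝔛 C M := by
  have hM' : FactorIn 𝔛 (L ⊔ M') (M ⊔ M') :=
    h.of_inf_le h𝔛 (inf_le_left.trans (sup_le_sup_left hLM' L))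
  have hsup : M ⊔ M' = M ⊔ (L ⊔ M') := by rw [← sup_assoc, sup_eq_left.2 hLM]
  rw [hsup, sup_right_iff h𝔛] at hM'
  exact hM'.of_inf_le h𝔛 ((sup_inf_assoc_of_le_of_normal hLM).trans_le (sup_le hLC hinf))

theorem of_sup_of_factorIn (h𝔛 : ClosedUnderImages 𝔛) (hext : ClosedUnderExtensions 𝔛)
    {L M L' M' Z W : Subgroup Γ} [L.Normal] [M'.Normal] [W.Normal] (hLM : L ≤ M)
    (hLM' : L' ≤ M') (hZL : Z ≤ L) (hWM : W ≤ M) (hinf : M' ⊓ M ≤ W)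
    (hsup : FactorIn 𝔛 (L ⊔ L') (M ⊔ M')) (hZW : FactorIn 𝔛 Z W) : FactorIn 𝔛 L M := by
  have hlower : FactorIn 𝔛 L (W ⊔ L) :=
    (sup_right_iff h𝔛).2 (hZW.of_inf_le h𝔛 (inf_le_left.trans hZL))
  have hupper : FactorIn 𝔛 (W ⊔ L) M :=
    hsup.of_sup_of_inf_le h𝔛 hLM hLM' le_sup_right (hinf.trans le_sup_left)
  exact hlower.trans h𝔛 hext (sup_le hWM hLM) hupper

end FactorIn

section JoinTranslates

variable {ι Δ : Type*} [Group Δ] (σ : ι → MulAut Δ)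

/-- The join of the translates `σ a • N` of the subgroup `N`, for `a` in the finite set `A`. It
interpolates between a single translate of `N` and the join of all of them. -/
def joinTranslates (A : Finset ι) (N : Subgroup Δ) : Subgroup Δ := ⨆ a ∈ A, σ a • N

instance mulAut_smul_normal (α : MulAut Δ) (N : Subgroup Δ) [hN : N.Normal] : (α • N).Normal :=
  hN.map _ α.surjective

instance joinTranslates_normal (A : Finset ι) (N : Subgroup Δ) [N.Normal] :
    (joinTranslates σ A N).Normal :=
  Subgroup.biSup_normal (A : Set ι) _ fun _ _ => inferInstance

theorem joinTranslates_mono (A : Finset ι) : Monotone (joinTranslates σ A) := fun _ _ h =>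
  iSup₂_mono fun _ _ => Subgroup.pointwise_smul_le_pointwise_smul_iff.2 h

theorem joinTranslates_insert [DecidableEq ι] (b : ι) (A : Finset ι) (N : Subgroup Δ) :
    joinTranslates σ (insert b A) N = joinTranslates σ A N ⊔ σ b • N := by
  rw [sup_comm]
  exact Finset.iSup_insert b A _

theorem joinTranslates_singleton (b : ι) (N : Subgroup Δ) :
    joinTranslates σ {b} N = σ b • N :=
  Finset.iSup_singleton b _

/-- The part of `N` that `σ b` moves into the join of the translates of `N` over `A`. Its
translates control what is lost when `b` is dropped from `insert b A`. -/
def translateOverlap (A : Finset ι) (b : ι) (N : Subgroup Δ) : Subgroup Δ :=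
  N ⊓ (σ b)⁻¹ • joinTranslates σ A N

instance translateOverlap_normal (A : Finset ι) (b : ι) (N : Subgroup Δ) [N.Normal] :
    (translateOverlap σ A b N).Normal :=
  inferInstanceAs (N ⊓ (σ b)⁻¹ • joinTranslates σ A N).Normal

theorem translateOverlap_mono (A : Finset ι) (b : ι) : Monotone (translateOverlap σ A b) :=
  fun _ _ h =>
    inf_le_inf h (Subgroup.pointwise_smul_le_pointwise_smul_iff.2 (joinTranslates_mono σ A h))

theorem smul_translateOverlap (A : Finset ι) (b : ι) (N : Subgroup Δ) :
    σ b • translateOverlap σ A b N = σ b • N ⊓ joinTranslates σ A N := by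
  rw [translateOverlap, Subgroup.smul_inf, smul_inv_smul]

theorem joinTranslates_insert_translateOverlap_le [DecidableEq ι] (A : Finset ι) (b : ι)
    (N : Subgroup Δ) :
    joinTranslates σ (insert b A) (translateOverlap σ A b N) ≤ joinTranslates σ A N := by
  rw [joinTranslates_insert, smul_translateOverlap]
  exact sup_le (joinTranslates_mono σ A inf_le_left) inf_le_right

theorem smul_inf_joinTranslates_le [DecidableEq ι] (A : Finset ι) (b : ι) (N : Subgroup Δ) :
    σ b • N ⊓ joinTranslates σ A N ≤
      joinTranslates σ (insert b A) (translateOverlap σ A b N) := by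
  rw [joinTranslates_insert, smul_translateOverlap]
  exact le_sup_right

end JoinTranslates

theorem FactorIn.joinTranslates_of_insert {𝔛 : (Γ : Type u) → [Group Γ] → Prop}
    (h𝔛 : ClosedUnderImages 𝔛) (hext : ClosedUnderExtensions 𝔛) {Δ : Type u} [Group Δ]
    {ι : Type*} [DecidableEq ι] (σ : ι → MulAut Δ) (A : Finset ι) (b : ι) {N M : Subgroup Δ}
    [N.Normal] [M.Normal] (hNM : N ≤ M)
    (hjoin : FactorIn 𝔛 (joinTranslates σ (insert b A) N) (joinTranslates σ (insert b A) M))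
    (hoverlap : FactorIn 𝔛 (joinTranslates σ (insert b A) (translateOverlap σ A b N))
      (joinTranslates σ (insert b A) (translateOverlap σ A b M))) :
    FactorIn 𝔛 (joinTranslates σ A N) (joinTranslates σ A M) := by
  rw [joinTranslates_insert σ b A N, joinTranslates_insert σ b A M] at hjoin
  exact hjoin.of_sup_of_factorIn h𝔛 hext (joinTranslates_mono σ A hNM)
    (Subgroup.pointwise_smul_le_pointwise_smul_iff.2 hNM)
    (joinTranslates_insert_translateOverlap_le σ A b N)
    (joinTranslates_insert_translateOverlap_le σ A b M) (smul_inf_joinTranslates_le σ A b M)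
    hoverlap

/-- For every ascending chain `K` of normal subgroups of `Γ`, at most `c` of the factors
`F (K (i + 1)) / F (K i)` of its image under `F` lie outside `𝔛`. With `F = id` this is the bound
on the chains of `Γ` themselves; other `F` allow comparing chains of different groups. -/
def ChainFactorsBound (𝔛 : (Γ : Type u) → [Group Γ] → Prop) {Γ Δ : Type u} [Group Γ]
    [Group Δ] (F : Subgroup Γ → Subgroup Δ) (c : ℕ) : Prop :=
  ∀ K : ℕ → Subgroup Γ, (∀ i, (K i).Normal) → (∀ i, K i ≤ K (i + 1)) →
    ∀ s : Finset ℕ, (∀ i ∈ s, ¬ FactorIn 𝔛 (F (K i)) (F (K (i + 1)))) → s.card ≤ c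

namespace ChainFactorsBound

variable {𝔛 : (Γ : Type u) → [Group Γ] → Prop} {Γ Γ' Δ Δ₁ Δ₂ : Type u} [Group Γ] [Group Γ']
  [Group Δ] [Group Δ₁] [Group Δ₂] {c c₁ c₂ : ℕ}

theorem comp {F : Subgroup Γ → Subgroup Δ} (hF : ChainFactorsBound 𝔛 F c)
    {Φ : Subgroup Γ' → Subgroup Γ} (hnormal : ∀ N : Subgroup Γ', N.Normal → (Φ N).Normal)
    (hmono : Monotone Φ) : ChainFactorsBound 𝔛 (F ∘ Φ) c := fun K hK hKmono =>
  hF (Φ ∘ K) (fun i => hnormal _ (hK i)) fun i => hmono (hKmono i)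

theorem of_imp {F : Subgroup Γ → Subgroup Δ} {F' : Subgroup Γ → Subgroup Δ₁}
    (hF : ChainFactorsBound 𝔛 F c) (himp : ∀ ⦃N M : Subgroup Γ⦄, N.Normal → M.Normal → N ≤ M →
      FactorIn 𝔛 (F N) (F M) → FactorIn 𝔛 (F' N) (F' M)) :
    ChainFactorsBound 𝔛 F' c := fun K hK hKmono s hs =>
  hF K hK hKmono s fun i hi => mt (himp (hK i) (hK (i + 1)) (hKmono i)) (hs i hi)

theorem add {F₁ : Subgroup Γ → Subgroup Δ₁} {F₂ : Subgroup Γ → Subgroup Δ₂}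
    {F : Subgroup Γ → Subgroup Δ} (hF₁ : ChainFactorsBound 𝔛 F₁ c₁)
    (hF₂ : ChainFactorsBound 𝔛 F₂ c₂)
    (himp : ∀ ⦃N M : Subgroup Γ⦄, N.Normal → M.Normal → N ≤ M →
      FactorIn 𝔛 (F₁ N) (F₁ M) → FactorIn 𝔛 (F₂ N) (F₂ M) → FactorIn 𝔛 (F N) (F M)) :
    ChainFactorsBound 𝔛 F (c₁ + c₂) := by
  classical
  intro K hK hKmono s hs
  let InFirst : ℕ → Prop := fun i => FactorIn 𝔛 (F₁ (K i)) (F₁ (K (i + 1)))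
  have houtside : (s.filter fun i => ¬ InFirst i).card ≤ c₁ :=
    hF₁ K hK hKmono _ fun i hi => (Finset.mem_filter.1 hi).2
  have hinside : (s.filter InFirst).card ≤ c₂ := by
    refine hF₂ K hK hKmono _ fun i hi hi₂ => ?_
    obtain ⟨his, hi₁⟩ := Finset.mem_filter.1 hi
    exact hs i his (himp (hK i) (hK (i + 1)) (hKmono i) hi₁ hi₂)
  have hcard := Finset.card_filter_add_card_filter_not (s := s) InFirst
  omega

theorem joinTranslates_of_insert (h𝔛 : ClosedUnderImages 𝔛) (hext : ClosedUnderExtensions 𝔛)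
    {ι : Type*} [DecidableEq ι] {σ : ι → MulAut Δ} {A : Finset ι} {b : ι}
    (h : ChainFactorsBound 𝔛 (joinTranslates σ (insert b A)) c) :
    ChainFactorsBound 𝔛 (joinTranslates σ A) (c * 2) := by
  have hoverlap : ChainFactorsBound 𝔛
      (joinTranslates σ (insert b A) ∘ translateOverlap σ A b) c :=
    h.comp (fun _ _ => inferInstance) (translateOverlap_mono σ A b)
  rw [mul_two]
  exact h.add hoverlap fun _ _ _ _ hNM => FactorIn.joinTranslates_of_insert h𝔛 hext σ A b hNM

theorem joinTranslates_of_union (h𝔛 : ClosedUnderImages 𝔛) (hext : ClosedUnderExtensions 𝔛)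
    {ι : Type*} [DecidableEq ι] {σ : ι → MulAut Δ} {A B : Finset ι}
    (h : ChainFactorsBound 𝔛 (joinTranslates σ (A ∪ B)) c) :
    ChainFactorsBound 𝔛 (joinTranslates σ A) (c * 2 ^ B.card) := by
  induction B using Finset.induction_on generalizing c with
  | empty => simpa using h
  | insert b B hb ih =>
    rw [Finset.union_insert] at h
    rw [Finset.card_insert_of_notMem hb, pow_succ', ← mul_assoc]
    exact ih (h.joinTranslates_of_insert h𝔛 hext)

end ChainFactorsBound

theorem exists_isComplement_insert_one {G : Type*} [Group G] [DecidableEq G] (H : Subgroup G)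
    [H.FiniteIndex] :
    ∃ T : Finset G, Subgroup.IsComplement ((insert 1 T : Finset G) : Set G) (H : Set G) ∧
      T.card = H.index - 1 := by
  obtain ⟨S, hS, hone⟩ := H.exists_isComplement_left 1
  have one_mem : 1 ∈ hS.finite_left.toFinset := hS.finite_left.mem_toFinset.2 hone
  refine ⟨hS.finite_left.toFinset.erase 1, ?_, ?_⟩
  · rwa [Finset.insert_erase one_mem, hS.finite_left.coe_toFinset]
  · rw [Finset.card_erase_of_mem one_mem, ← Set.ncard_eq_toFinset_card S hS.finite_left,
      hS.ncard_left]

section Conjugation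

variable {G : Type*} [Group G] {H : Subgroup G} [H.Normal]

theorem conjNormal_smul_eq_self {h : G} (hh : h ∈ H) (N : Subgroup ↥H) [N.Normal] :
    (MulAut.conjNormal h : MulAut ↥H) • N = N := by
  rw [MulAut.conjNormal_val (h := ⟨h, hh⟩), Subgroup.Normal.conj_smul_eq_self]

theorem conjNormal_smul_le_joinTranslates {T : Finset G}
    (hT : (T : Set G) * (H : Set G) = Set.univ) (g : G) (N : Subgroup ↥H) [N.Normal] :
    (MulAut.conjNormal g : MulAut ↥H) • N ≤ joinTranslates MulAut.conjNormal T N := by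
  obtain ⟨t, ht, h, hh, rfl⟩ : g ∈ (T : Set G) * (H : Set G) := hT ▸ Set.mem_univ g
  rw [map_mul, mul_smul, conjNormal_smul_eq_self hh]
  exact le_iSup₂_of_le t ht le_rfl

theorem normal_map_subtype_of_conjNormal_smul_le {N : Subgroup ↥H}
    (hN : ∀ g : G, (MulAut.conjNormal g : MulAut ↥H) • N ≤ N) : (N.map H.subtype).Normal := by
  constructor
  rintro _ ⟨x, hx, rfl⟩ g
  exact ⟨MulAut.conjNormal g x, hN g (Subgroup.smul_mem_pointwise_smul _ _ _ hx), by simp⟩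

theorem joinTranslates_map_subtype_normal {T : Finset G}
    (hT : (T : Set G) * (H : Set G) = Set.univ) (N : Subgroup ↥H) [N.Normal] :
    ((joinTranslates MulAut.conjNormal T N).map H.subtype).Normal := by
  refine normal_map_subtype_of_conjNormal_smul_le fun g => ?_
  rw [Subgroup.pointwise_smul_subset_iff]
  refine iSup₂_le fun t _ => ?_
  rw [← Subgroup.pointwise_smul_subset_iff, ← mul_smul, ← map_mul]
  exact conjNormal_smul_le_joinTranslates hT (g * t) N

end Conjugation

theorem ChainFactorsBound.joinTranslates_conjNormal
    {𝔛 : (Γ : Type u) → [Group Γ] → Prop} (h𝔛 : ClosedUnderImages 𝔛) {G : Type u} [Group G]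
    {H : Subgroup G} [H.Normal] {c : ℕ} (hG : ChainFactorsBound 𝔛 (id : Subgroup G → Subgroup G) c)
    {T : Finset G} (hT : (T : Set G) * (H : Set G) = Set.univ) :
    ChainFactorsBound 𝔛 (joinTranslates (MulAut.conjNormal : G → MulAut ↥H) T) c := by
  refine (hG.comp (Φ := fun N => (joinTranslates MulAut.conjNormal T N).map H.subtype)
    (fun N _ => joinTranslates_map_subtype_normal hT N)
    fun N M hNM => Subgroup.map_mono (joinTranslates_mono _ T hNM)).of_imp ?_
  intro N M _ _ _ h
  exact h.of_map h𝔛 H.subtype_injective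

/-- **Lemma.** Let `𝔛` be a class of groups closed under isomorphism, quotients and
extensions, and let `H ⊴ G` have finite index.  If every ascending chain of normal
subgroups of `G` has at most `c` factors not in `𝔛`, then every ascending chain of
normal subgroups of `H` has at most `c·2^{|G:H|-1}` factors not in `𝔛`. -/
theorem chain_factors_bound_of_normal_finite_index
    (𝔛 : (Γ : Type u) → [inst : Group Γ] → Prop)
    (hiso : ∀ (Γ₁ Γ₂ : Type u) [Group Γ₁] [Group Γ₂],
      Nonempty (Γ₁ ≃* Γ₂) → 𝔛 Γ₁ → 𝔛 Γ₂)
    (hquot : ∀ (Γ : Type u) [Group Γ] (N : Subgroup Γ) [N.Normal], 𝔛 Γ → 𝔛 (Γ ⧸ N))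
    (hext : ∀ (Γ : Type u) [Group Γ] (N : Subgroup Γ) [N.Normal],
      𝔛 ↥N → 𝔛 (Γ ⧸ N) → 𝔛 Γ)
    (G : Type u) [Group G] (H : Subgroup G) [H.Normal] [H.FiniteIndex] (c : ℕ)
    (hchain : ∀ K : ℕ → Subgroup G, (∀ i, (K i).Normal) → (∀ i, K i ≤ K (i + 1)) →
      ∀ s : Finset ℕ, (∀ i ∈ s, ¬ FactorIn 𝔛 (K i) (K (i + 1))) → s.card ≤ c) :
    ∀ K : ℕ → Subgroup ↥H, (∀ i, (K i).Normal) → (∀ i, K i ≤ K (i + 1)) →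
      ∀ s : Finset ℕ, (∀ i ∈ s, ¬ FactorIn 𝔛 (K i) (K (i + 1))) →
        s.card ≤ c * 2 ^ (H.index - 1) := by
  classical
  have h𝔛 : ClosedUnderImages 𝔛 := .of_iso_of_quotient hiso hquot
  obtain ⟨T, hT, hcard⟩ := exists_isComplement_insert_one H
  have hjoin :
      ChainFactorsBound 𝔛 (joinTranslates (MulAut.conjNormal : G → MulAut ↥H) ({1} ∪ T)) c :=
    ChainFactorsBound.joinTranslates_conjNormal h𝔛 hchain hT.mul_eq
  have hone : joinTranslates (MulAut.conjNormal : G → MulAut ↥H) {1} = id := by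
    ext1 N
    rw [joinTranslates_singleton, map_one, one_smul, id]
  have hH := hjoin.joinTranslates_of_union h𝔛 hext
  rwa [hone, hcard] at hH
end

section
/- Let G be a branch group acting on a rooted tree T and let H be a normal subgroup of finite index in G. Then in any ascending chain (K_i)_{i∈ℕ} of normal subgroups of H there are at most 2^{|G:H|−1} indices i for which the factor K_i/K_{i-1} is not virtually soluble. -/
/-!  Common definitions: rooted trees of type `(m n)`, tree automorphisms,
rigid stabilizers, branch groups, and auxiliary notions. -/

universe u

/-!
Let `Γ` act faithfully by automorphisms on the tree, with rigid layer stabilizers of finite index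
and a bounded number of orbits on the layers; every finite index subgroup of a branch group is such
a `Γ`. For `K` normal in `Γ` record the set of vertices `v` such that `K` acts trivially on `T_v`.
If `K ≤ K'` have the same set, then `K'/K` is virtually abelian: choose a layer on which `K` moves
every vertex whose subtree it does not fix; up to finite index, an element of `K'` is a product of
elements of the rigid stabilizers of such vertices, and for these `[rist v, rist v] ≤ K`. Otherwise
some orbit of vertices, on any sufficiently low layer, is in the set of `K` but not in that of `K'`.
An orbit drops out at most once along an ascending chain.
-/

open scoped commutatorElement

section Subgroups

open Subgroup

variable {Γ : Type*} [Group Γ]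

theorem iSup_commutator_le_iff {ι : Sort*} {A : ι → Subgroup Γ} {B N : Subgroup Γ} [N.Normal] :
    ⁅⨆ i, A i, B⁆ ≤ N ↔ ∀ i, ⁅A i, B⁆ ≤ N := by
  have commutator_le_iff (C : Subgroup Γ) : ⁅C, B⁆ ≤ N ↔
      C ≤ (centralizer (B.map (QuotientGroup.mk' N))).comap (QuotientGroup.mk' N) := by
    rw [← map_le_iff_le_comap, ← commutator_eq_bot_iff_le_centralizer, ← map_commutator,
      Subgroup.map_eq_bot_iff, QuotientGroup.ker_mk']
  simp only [commutator_le_iff, iSup_le_iff]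

theorem commutator_iSup_le_iff {ι : Sort*} {A N : Subgroup Γ} {B : ι → Subgroup Γ} [N.Normal] :
    ⁅A, ⨆ i, B i⁆ ≤ N ↔ ∀ i, ⁅A, B i⁆ ≤ N := by
  simp only [commutator_comm A, iSup_commutator_le_iff]

theorem relIndex_iSup_ne_zero {ι : Type*} [Finite ι] {R S : ι → Subgroup Γ}
    (hcomm : Pairwise fun i j ↦ ∀ x y : Γ, x ∈ R i → y ∈ R j → Commute x y)
    (hS : ∀ i, (S i).relIndex (R i) ≠ 0) : (⨆ i, S i).relIndex (⨆ i, R i) ≠ 0 := by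
  have := Fintype.ofFinite ι
  let φ := noncommPiCoprod hcomm
  let D : Subgroup (∀ i, R i) := ⨅ i, ((S i).subgroupOf (R i)).comap (Pi.evalMonoidHom _ i)
  have hD : D.index ≠ 0 := index_iInf_ne_zero fun i ↦ by
    rw [index_comap_of_surjective _ (Function.surjective_eval i)]
    exact hS i
  have hDφ : D.map φ ≤ ⨆ i, S i := by
    rintro _ ⟨d, hd, rfl⟩
    rw [noncommPiCoprod_apply]
    exact noncommProd_mem _ _ fun i _ ↦ mem_iSup_of_mem i (mem_iInf.1 hd i)
  have hφ : (D.map φ).relIndex (⨆ i, R i) ≠ 0 := by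
    rw [← noncommPiCoprod_range (hcomm := hcomm), MonoidHom.range_eq_map, relIndex_map_map,
      top_sup_eq, relIndex_top_right]
    exact fun h ↦ hD (zero_dvd_iff.1 (h ▸ index_dvd_of_le le_sup_left))
  exact fun h ↦ hφ (relIndex_eq_zero_of_le_left hDφ h)

theorem ncard_orbit_image_le_index {α : Type*} [MulAction Γ α] (H : Subgroup Γ) [H.FiniteIndex]
    {X : Set α} (hX : ∀ x ∈ X, ∀ y ∈ X, ∃ g : Γ, g • x = y) :
    (MulAction.orbit H '' X).ncard ≤ H.index := by
  obtain rfl | ⟨x, hx⟩ := X.eq_empty_or_nonempty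
  · simp
  let f : Γ ⧸ H → Set α := Quotient.lift (fun g : Γ ↦ MulAction.orbit H (g⁻¹ • x)) fun a b hab ↦
    MulAction.orbit_eq_iff.2
      ⟨⟨a⁻¹ * b, QuotientGroup.leftRel_apply.1 hab⟩, by simp [Subgroup.smul_def, mul_smul]⟩
  have hf : MulAction.orbit H '' X ⊆ Set.range f := by
    rintro _ ⟨y, hy, rfl⟩
    obtain ⟨g, rfl⟩ := hX x hx y hy
    exact ⟨(g⁻¹ : Γ), by simp [f]⟩
  exact (Set.ncard_le_ncard hf).trans (Finite.card_range_le f)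

theorem le_stabilizer_smul {α : Type*} [MulAction Γ α] {K : Subgroup Γ} [hK : K.Normal] {x : α}
    (h : K ≤ MulAction.stabilizer Γ x) (g : Γ) : K ≤ MulAction.stabilizer Γ (g • x) := by
  intro k hk
  have hfix : (g⁻¹ * k * g) • x = x := h (by simpa using hK.conj_mem k hk g⁻¹)
  rwa [mul_smul, mul_smul, inv_smul_eq_iff] at hfix

theorem factorVirtuallyAbelian_of_commutator_le {A B S : Subgroup Γ} [hA : (A.subgroupOf B).Normal]
    [S.FiniteIndex] (h : ⁅S ⊓ B, S ⊓ B⁆ ≤ A) : FactorVirtuallyAbelian A B := by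
  let π := QuotientGroup.mk' (A.subgroupOf B)
  refine ⟨hA, (S.subgroupOf B).map π, ⟨fun h0 ↦ ?_⟩, ?_⟩
  · have hdvd := index_map_dvd (S.subgroupOf B) (QuotientGroup.mk'_surjective (A.subgroupOf B))
    exact FiniteIndex.index_ne_zero (zero_dvd_iff.1 (h0 ▸ hdvd))
  · rintro _ ⟨x, hx, rfl⟩ _ ⟨y, hy, rfl⟩
    have hxy : ⁅x, y⁆ ∈ A.subgroupOf B :=
      h (commutator_mem_commutator (mem_inf.2 ⟨hx, x.2⟩) (mem_inf.2 ⟨hy, y.2⟩))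
    rw [← commutatorElement_eq_one_iff_mul_comm, ← map_commutatorElement]
    exact (QuotientGroup.eq_one_iff _).2 hxy

theorem VirtuallyAbelian.virtuallySolvable (h : VirtuallyAbelian Γ) : VirtuallySolvable Γ := by
  obtain ⟨S, hS, hcomm⟩ := h
  exact ⟨S, hS, Group.isSolvable_of_comm fun a b ↦ Subtype.ext (hcomm a a.2 b b.2)⟩

theorem FactorVirtuallyAbelian.factorVirtuallySolvable {A B : Subgroup Γ}
    (h : FactorVirtuallyAbelian A B) : FactorVirtuallySolvable A B :=
  h.imp fun _ ↦ VirtuallyAbelian.virtuallySolvable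

end Subgroups

variable {m : ℕ → ℕ}

namespace Vertex

variable {u v w : Vertex m}

theorem IsPrefix.refl (v : Vertex m) : IsPrefix v v := ⟨le_rfl, fun _ ↦ rfl⟩

theorem IsPrefix.level_le (h : IsPrefix u v) : u.level ≤ v.level := h.1

theorem IsPrefix.trans (huv : IsPrefix u v) (hvw : IsPrefix v w) : IsPrefix u w :=
  ⟨huv.1.trans hvw.1, fun i ↦ (hvw.2 (Fin.castLE huv.1 i)).trans (huv.2 i)⟩

theorem IsPrefix.of_level_le (huw : IsPrefix u w) (hvw : IsPrefix v w)
    (h : u.level ≤ v.level) : IsPrefix u v :=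
  ⟨h, fun i ↦ (hvw.2 (Fin.castLE h i)).symm.trans (huw.2 i)⟩

theorem IsPrefix.eq_of_level_eq (huw : IsPrefix u w) (hvw : IsPrefix v w)
    (h : u.level = v.level) : u = v := by
  obtain ⟨n, x⟩ := u
  obtain ⟨k, y⟩ := v
  obtain rfl : n = k := h
  exact congrArg (Sigma.mk n) (funext fun i ↦ (huw.2 i).symm.trans (hvw.2 i))

/-- The prefix of length `k` of a vertex, or the vertex itself if its level is less than `k`. -/
def take (k : ℕ) (v : Vertex m) : Vertex m :=
  ⟨min k v.1, fun i ↦ v.2 (Fin.castLE (min_le_right _ _) i)⟩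

theorem take_isPrefix (k : ℕ) (v : Vertex m) : IsPrefix (take k v) v :=
  ⟨min_le_right _ _, fun _ ↦ rfl⟩

theorem level_take (k : ℕ) (v : Vertex m) : (take k v).level = min k v.level := rfl

theorem take_mem_layer {n k : ℕ} (hv : v ∈ layer m n) (h : k ≤ n) : take k v ∈ layer m k :=
  min_eq_left (h.trans_eq hv.symm)

theorem IsPrefix.eq_take {k : ℕ} (h : IsPrefix u v) (hu : u ∈ layer m k) : u = take k v :=
  h.eq_of_level_eq (take_isPrefix k v)
    ((min_eq_left (hu ▸ h.level_le)).trans hu.symm).symm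

theorem isChild_take {n : ℕ} (hv : v.level = n + 1) : IsChild (take n v) v :=
  ⟨hv.trans (congrArg (· + 1) (min_eq_left (n.le_succ.trans_eq hv.symm)).symm), take_isPrefix n v⟩

theorem isPrefix_iff_reflTransGen_isChild :
    IsPrefix u v ↔ Relation.ReflTransGen IsChild u v := by
  refine ⟨fun h ↦ ?_, fun h ↦ ?_⟩
  · induction hn : v.level using Nat.strong_induction_on generalizing v with
    | _ n ih =>
      obtain heq | hlt := h.level_le.eq_or_lt
      · rw [h.eq_of_level_eq (.refl v) heq]
      · have hchild : IsChild (take (n - 1) v) v := isChild_take (by omega)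
        have hlevel : v.level = (take (n - 1) v).level + 1 := hchild.1
        exact .tail (ih _ (by omega) (h.of_level_le hchild.2 (by omega)) rfl) hchild
  · induction h with
    | refl => exact .refl u
    | tail _ hchild ih => exact ih.trans hchild.2

theorem exists_mem_layer_isPrefix (hm : ∀ n, 0 < m n) {n : ℕ} (h : v.level ≤ n) :
    ∃ w ∈ layer m n, IsPrefix v w :=
  ⟨⟨n, fun i ↦ if hi : i.1 < v.1 then v.2 ⟨i, hi⟩ else ⟨0, hm i⟩⟩, rfl, h, fun i ↦ dif_pos i.2⟩

end Vertex

open Vertex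

theorem finite_layer (m : ℕ → ℕ) (n : ℕ) : (layer m n).Finite :=
  (Set.finite_range fun x : ∀ i : Fin n, Fin (m i) ↦ (⟨n, x⟩ : Vertex m)).subset <| by
    rintro ⟨_, x⟩ rfl
    exact ⟨x, rfl⟩

section RigidStabilizers

variable {Γ : Type*} [Group Γ] [MulAction Γ (Vertex m)] {X Y : Set (Vertex m)} {v w : Vertex m}
  {a b g : Γ}

theorem mem_rist : g ∈ rist Γ v ↔ ∀ w, ¬ IsPrefix v w → g • w = w := by
  simp only [rist, Subgroup.mem_iInf, Set.mem_ofPred_eq, MulAction.mem_stabilizer_iff]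

theorem smul_eq_of_mem_ristSet (hg : g ∈ ristSet Γ X) (hw : ∀ v ∈ X, ¬ IsPrefix v w) :
    g • w = w := by
  have hle : ristSet Γ X ≤ MulAction.stabilizer Γ w :=
    iSup₂_le fun v hv _ ha ↦ mem_rist.1 ha w (hw v hv)
  exact hle hg

theorem commute_of_mem_rist [FaithfulSMul Γ (Vertex m)] (hlevel : v.level = w.level) (hvw : v ≠ w)
    (ha : a ∈ rist Γ v) (hb : b ∈ rist Γ w) : Commute a b := by
  have hdisj : (MulAction.toPerm a : Equiv.Perm (Vertex m)).Disjoint (MulAction.toPerm b) := by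
    intro u
    by_cases hu : IsPrefix v u
    · exact .inr (mem_rist.1 hb u fun hu' ↦ hvw (hu.eq_of_level_eq hu' hlevel))
    · exact .inl (mem_rist.1 ha u hu)
  exact Commute.of_map (f := MulAction.toPermHom Γ (Vertex m)) MulAction.toPerm_injective
    hdisj.commute

theorem commutator_rist_eq_bot [FaithfulSMul Γ (Vertex m)] (hlevel : v.level = w.level)
    (hvw : v ≠ w) : ⁅rist Γ v, rist Γ w⁆ = ⊥ :=
  (Subgroup.commutator_le.2 fun _ ha _ hb ↦ Subgroup.mem_bot.2
    (commute_of_mem_rist hlevel hvw ha hb).commutator_eq).antisymm bot_le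

theorem commutator_ristSet_le_iff {N : Subgroup Γ} [N.Normal] :
    ⁅ristSet Γ X, ristSet Γ Y⁆ ≤ N ↔ ∀ v ∈ X, ∀ w ∈ Y, ⁅rist Γ v, rist Γ w⁆ ≤ N := by
  simp only [ristSet, iSup_commutator_le_iff, commutator_iSup_le_iff]
  exact ⟨fun h v hv w hw ↦ h w hw v hv, fun h w hw v hv ↦ h v hv w hw⟩

theorem exists_mul_eq_of_mem_ristLayer [FaithfulSMul Γ (Vertex m)] {n : ℕ}
    (hX : X ⊆ layer m n) (hg : g ∈ ristLayer m Γ n) :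
    ∃ b ∈ ristSet Γ (layer m n \ X), ∃ a ∈ ristSet Γ X, b * a = g := by
  have hcomm : ⁅ristSet Γ (layer m n \ X), ristSet Γ X⁆ ≤ ⊥ :=
    commutator_ristSet_le_iff.2 fun v hv w hw ↦
      (commutator_rist_eq_bot (hv.1.trans (hX hw).symm) (ne_of_mem_of_not_mem hw hv.2).symm).le
  have hsup : ristLayer m Γ n = ristSet Γ (layer m n \ X) ⊔ ristSet Γ X := by
    rw [ristSet, ristSet, ← iSup_union, Set.sdiff_union_of_subset hX]
    rfl
  rw [hsup, ← SetLike.mem_coe, Subgroup.coe_mul_of_left_le_normalizer_right _ _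
    (Subgroup.le_normalizer_iff_commutator_le_right.2 (hcomm.trans bot_le))] at hg
  exact Set.mem_mul.1 hg

theorem map_subtype_rist (H : Subgroup Γ) (v : Vertex m) :
    (rist H v).map H.subtype = rist Γ v ⊓ H := by
  ext g
  constructor
  · rintro ⟨h, hh, rfl⟩
    exact ⟨mem_rist.2 fun w hw ↦ mem_rist.1 hh w hw, h.2⟩
  · rintro ⟨hg, hgH⟩
    exact ⟨⟨g, hgH⟩, mem_rist.2 fun w hw ↦ mem_rist.1 hg w hw, rfl⟩

theorem finiteIndex_ristLayer_subgroup [FaithfulSMul Γ (Vertex m)] {n : ℕ}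
    (hrist : (ristLayer m Γ n).FiniteIndex) (H : Subgroup Γ) [H.FiniteIndex] :
    (ristLayer m H n).FiniteIndex := by
  have := (finite_layer m n).to_subtype
  have hcomm : Pairwise fun v w : layer m n ↦
      ∀ a b : Γ, a ∈ rist Γ v.1 → b ∈ rist Γ w.1 → Commute a b := fun v w hvw _ _ ↦
    commute_of_mem_rist (v.2.trans w.2.symm) (Subtype.coe_injective.ne hvw)
  have hrel (v : layer m n) : ((rist H v.1).map H.subtype).relIndex (rist Γ v.1) ≠ 0 := by
    rw [map_subtype_rist, Subgroup.inf_relIndex_left]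
    exact Subgroup.isFiniteRelIndex_of_finiteIndex.relIndex_ne_zero
  have hmap : ((ristLayer m H n).map H.subtype).relIndex (ristLayer m Γ n) ≠ 0 := by
    rw [ristLayer, ristLayer, ristSet, ristSet, ← iSup_subtype'', ← iSup_subtype'',
      Subgroup.map_iSup]
    exact relIndex_iSup_ne_zero hcomm hrel
  have hindex : ((ristLayer m H n).map H.subtype).index ≠ 0 := by
    rw [← Subgroup.relIndex_top_right]
    refine Subgroup.relIndex_ne_zero_trans hmap ?_
    rw [Subgroup.relIndex_top_right]
    exact hrist.index_ne_zero
  rw [Subgroup.index_map_subtype] at hindex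
  exact ⟨left_ne_zero_of_mul hindex⟩

end RigidStabilizers

/-- The group `Γ` acts on the rooted tree of type `m` by tree automorphisms. -/
def IsTreeAction (m : ℕ → ℕ) (Γ : Type*) [Group Γ] [MulAction Γ (Vertex m)] : Prop :=
  ∀ (g : Γ) (v w : Vertex m), IsChild v w ↔ IsChild (g • v) (g • w)

/-- The subgroup `K` acts trivially on the subtree `T_v`. -/
def FixesSubtree {Γ : Type*} [Group Γ] [MulAction Γ (Vertex m)] (K : Subgroup Γ) (v : Vertex m) :
    Prop :=
  ∀ w, IsPrefix v w → K ≤ MulAction.stabilizer Γ w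

section TreeActions

variable {Γ : Type*} [Group Γ] [MulAction Γ (Vertex m)] {K K' : Subgroup Γ} {u v w : Vertex m}

namespace IsTreeAction

theorem subgroup (hΓ : IsTreeAction m Γ) (H : Subgroup Γ) : IsTreeAction m H :=
  fun h ↦ hΓ h

theorem level_smul (hΓ : IsTreeAction m Γ) (g : Γ) (v : Vertex m) : (g • v).level = v.level := by
  have level_le (n : ℕ) : ∀ (g : Γ) (v : Vertex m), v.level = n → n ≤ (g • v).level := by
    induction n with
    | zero => exact fun _ _ _ ↦ Nat.zero_le _
    | succ n ih =>
      intro g v hv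
      have hlevel : (g • v).level = (g • take n v).level + 1 :=
        ((hΓ g _ _).1 (isChild_take hv)).1
      exact hlevel ▸ Nat.succ_le_succ
        (ih g _ (take_mem_layer (m := m) (n := n + 1) hv n.le_succ))
  refine le_antisymm ?_ (level_le _ g v rfl)
  simpa only [inv_smul_smul] using level_le _ g⁻¹ (g • v) rfl

theorem isPrefix_smul (hΓ : IsTreeAction m Γ) (g : Γ) (h : IsPrefix u v) :
    IsPrefix (g • u) (g • v) := by
  rw [isPrefix_iff_reflTransGen_isChild] at h ⊢
  exact h.lift (g • ·) fun _ _ ↦ (hΓ g _ _).1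

theorem take_smul (hΓ : IsTreeAction m Γ) (k : ℕ) (g : Γ) (v : Vertex m) :
    take k (g • v) = g • take k v :=
  (take_isPrefix k _).eq_of_level_eq (hΓ.isPrefix_smul g (take_isPrefix k v))
    (by simp only [level_take, hΓ.level_smul])

theorem conj_mem_rist (hΓ : IsTreeAction m Γ) {a : Γ} (ha : a ∈ rist Γ v) (g : Γ) :
    g * a * g⁻¹ ∈ rist Γ (g • v) := by
  refine mem_rist.2 fun w hw ↦ ?_
  have hfix : a • g⁻¹ • w = g⁻¹ • w := mem_rist.1 ha _ fun h ↦
    hw (by simpa only [smul_inv_smul] using hΓ.isPrefix_smul g h)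
  rw [mul_smul, mul_smul, hfix, smul_inv_smul]

/-- Modulo `K`, an element `a` of `rist Γ v` equals its conjugate by an element of `K` moving `v`,
which commutes with `rist Γ v`. -/
theorem commutator_rist_le (hΓ : IsTreeAction m Γ) [FaithfulSMul Γ (Vertex m)] [hK : K.Normal]
    (hv : ¬ K ≤ MulAction.stabilizer Γ v) : ⁅rist Γ v, rist Γ v⁆ ≤ K := by
  obtain ⟨k, hk, hkv⟩ := SetLike.not_le_iff_exists.1 hv
  refine Subgroup.commutator_le.2 fun a ha b hb ↦ ?_
  let π := QuotientGroup.mk' K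
  have hπk : π k = 1 := (QuotientGroup.eq_one_iff k).2 hk
  have hcomm : Commute (k * a * k⁻¹) b :=
    commute_of_mem_rist (hΓ.level_smul k v) hkv (hΓ.conj_mem_rist ha k) hb
  refine (QuotientGroup.eq_one_iff _).1 ?_
  calc π ⁅a, b⁆ = π ⁅k * a * k⁻¹, b⁆ := by simp [map_commutatorElement, hπk]
    _ = 1 := by rw [hcomm.commutator_eq, map_one]

theorem le_stabilizer_of_isPrefix (hΓ : IsTreeAction m Γ) (h : IsPrefix v w)
    (hK : K ≤ MulAction.stabilizer Γ w) : K ≤ MulAction.stabilizer Γ v := by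
  intro k hk
  have hkv : IsPrefix (k • v) w := by
    simpa only [MulAction.mem_stabilizer_iff.1 (hK hk)] using hΓ.isPrefix_smul k h
  exact hkv.eq_of_level_eq h (hΓ.level_smul k v)

end IsTreeAction

namespace FixesSubtree

theorem anti (hK : K ≤ K') (h : FixesSubtree K' v) : FixesSubtree K v :=
  fun w hw ↦ hK.trans (h w hw)

theorem of_isPrefix (h : FixesSubtree K v) (hvu : IsPrefix v u) : FixesSubtree K u :=
  fun w hw ↦ h w (hvu.trans hw)

theorem smul [K.Normal] (hΓ : IsTreeAction m Γ) (h : FixesSubtree K v) (g : Γ) :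
    FixesSubtree K (g • v) := by
  intro w hw
  have hvw : IsPrefix v (g⁻¹ • w) := by
    simpa only [inv_smul_smul] using hΓ.isPrefix_smul g⁻¹ hw
  simpa only [smul_inv_smul] using le_stabilizer_smul (h _ hvw) g

theorem of_forall_mem_layer (hm : ∀ n, 0 < m n) (hΓ : IsTreeAction m Γ) {n : ℕ} (hn : v.level ≤ n)
    (h : ∀ u ∈ layer m n, IsPrefix v u → FixesSubtree K u) : FixesSubtree K v := by
  intro w hvw
  obtain hwn | hnw := le_total w.level n
  · obtain ⟨u, hu, hwu⟩ := exists_mem_layer_isPrefix hm hwn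
    exact hΓ.le_stabilizer_of_isPrefix hwu (h u hu (hvw.trans hwu) u (.refl u))
  · have htake : take n w ∈ layer m n := min_eq_left hnw
    have hv : IsPrefix v (take n w) :=
      hvw.of_level_le (take_isPrefix n w) (hn.trans_eq htake.symm)
    exact h _ htake hv w (take_isPrefix n w)

end FixesSubtree

section BoundedOrbits

variable {r : ℕ}

theorem exists_orbit_eq_of_take_eq (hm : ∀ n, 0 < m n) (hΓ : IsTreeAction m Γ)
    (horb : ∀ n, (MulAction.orbit Γ '' layer m n).ncard ≤ r) :
    ∃ n₀, ∀ n ≥ n₀, ∀ u ∈ layer m n, ∀ w ∈ layer m n, take n₀ u = take n₀ w →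
      MulAction.orbit Γ u = MulAction.orbit Γ w := by
  let c (n : ℕ) : ℕ := (MulAction.orbit Γ '' layer m n).ncard
  have hbdd : BddAbove (Set.range c) := ⟨r, Set.forall_mem_range.2 horb⟩
  obtain ⟨n₀, hn₀⟩ := Nat.sSup_mem (Set.range_nonempty c) hbdd
  have hmax (n : ℕ) : c n ≤ c n₀ := hn₀ ▸ le_csSup hbdd (Set.mem_range_self n)
  refine ⟨n₀, fun n hn u hu w hw huw ↦ ?_⟩
  have take_image_orbit (v : Vertex m) :
      take n₀ '' MulAction.orbit Γ v = MulAction.orbit Γ (take n₀ v) := by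
    simp only [MulAction.orbit, ← Set.range_comp, Function.comp_def, hΓ.take_smul]
  have himage : (take n₀ '' ·) '' (MulAction.orbit Γ '' layer m n) =
      MulAction.orbit Γ '' layer m n₀ := by
    simp only [Set.image_image, take_image_orbit]
    rw [← Set.image_image (MulAction.orbit Γ) (take n₀)]
    congr 1
    refine Set.Subset.antisymm (Set.image_subset_iff.2 fun v hv ↦ take_mem_layer hv hn)
      fun v hv ↦ ?_
    obtain ⟨x, hx, hvx⟩ := exists_mem_layer_isPrefix hm (v := v) (hv.trans_le hn)
    exact ⟨x, hx, (hvx.eq_take hv).symm⟩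
  have hfin : (MulAction.orbit Γ '' layer m n).Finite := (finite_layer m n).image _
  have hinj : Set.InjOn (take n₀ '' ·) (MulAction.orbit Γ '' layer m n) :=
    Set.injOn_of_ncard_image_eq
      ((Set.ncard_image_le hfin).antisymm (himage ▸ hmax n)) hfin
  refine hinj (Set.mem_image_of_mem _ hu) (Set.mem_image_of_mem _ hw) ?_
  simp only [take_image_orbit, huw]

theorem exists_layer_fixesSubtree_of_le_stabilizer (hm : ∀ n, 0 < m n) (hΓ : IsTreeAction m Γ)
    (horb : ∀ n, (MulAction.orbit Γ '' layer m n).ncard ≤ r) (K : Subgroup Γ) [K.Normal] :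
    ∃ n, ∀ u ∈ layer m n, K ≤ MulAction.stabilizer Γ u → FixesSubtree K u := by
  obtain ⟨n₀, hn₀⟩ := exists_orbit_eq_of_take_eq hm hΓ horb
  have hev : ∀ v ∈ layer m n₀, ∀ᶠ n in Filter.atTop, ∀ u ∈ layer m n, IsPrefix v u →
      K ≤ MulAction.stabilizer Γ u → FixesSubtree K u := by
    intro v hv
    by_cases hfix : FixesSubtree K v
    · exact .of_forall fun n u _ hvu _ ↦ hfix.of_isPrefix hvu
    · obtain ⟨w, hvw, hw⟩ : ∃ w, IsPrefix v w ∧ ¬ K ≤ MulAction.stabilizer Γ w := by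
        simpa only [FixesSubtree, not_forall, exists_prop] using hfix
      filter_upwards [Filter.eventually_ge_atTop w.level, Filter.eventually_ge_atTop n₀]
        with n hwn hn u hu hvu hKu
      obtain ⟨x, hx, hwx⟩ := exists_mem_layer_isPrefix hm hwn
      have horbit : MulAction.orbit Γ x = MulAction.orbit Γ u :=
        hn₀ n hn x hx u hu (((hvw.trans hwx).eq_take hv).symm.trans (hvu.eq_take hv))
      obtain ⟨g, rfl⟩ := MulAction.orbit_eq_iff.1 horbit
      exact absurd (hΓ.le_stabilizer_of_isPrefix hwx (le_stabilizer_smul hKu g)) hw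
  obtain ⟨n, hn, hn₀n⟩ := (((Filter.eventually_all_finite (finite_layer m n₀)).2 hev).and
    (Filter.eventually_ge_atTop n₀)).exists
  exact ⟨n, fun u hu ↦ hn (take n₀ u) (take_mem_layer hu hn₀n) u hu (take_isPrefix n₀ u)⟩

theorem ristLayer_inf_le_ristSet [FaithfulSMul Γ (Vertex m)] {n : ℕ} {X : Set (Vertex m)}
    (hX : X ⊆ layer m n) (hK : ∀ v ∈ layer m n \ X, FixesSubtree K v) :
    ristLayer m Γ n ⊓ K ≤ ristSet Γ X := by
  rintro _ ⟨hg, hgK⟩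
  obtain ⟨b, hb, a, ha, rfl⟩ := exists_mul_eq_of_mem_ristLayer hX hg
  suffices hb1 : b = 1 by rwa [hb1, one_mul]
  refine eq_of_smul_eq_smul (α := Vertex m) fun w ↦ ?_
  rw [one_smul]
  by_cases hw : ∃ v ∈ layer m n \ X, IsPrefix v w
  · obtain ⟨v, hv, hvw⟩ := hw
    have haw : a • w = w := smul_eq_of_mem_ristSet ha fun x hx hxw ↦
      hv.2 (hxw.eq_of_level_eq hvw ((hX hx).trans hv.1.symm) ▸ hx)
    calc b • w = (b * a) • w := by rw [mul_smul, haw]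
      _ = w := hK v hv w hvw hgK
  · exact smul_eq_of_mem_ristSet hb fun v hv hvw ↦ hw ⟨v, hv, hvw⟩

theorem factorVirtuallyAbelian_of_fixesSubtree_imp [FaithfulSMul Γ (Vertex m)]
    (hm : ∀ n, 0 < m n) (hΓ : IsTreeAction m Γ) (hrist : ∀ n, (ristLayer m Γ n).FiniteIndex)
    (horb : ∀ n, (MulAction.orbit Γ '' layer m n).ncard ≤ r) [K.Normal]
    (h : ∀ v : Vertex m, FixesSubtree K v → FixesSubtree K' v) : FactorVirtuallyAbelian K K' := by
  obtain ⟨n, hn⟩ := exists_layer_fixesSubtree_of_le_stabilizer hm hΓ horb K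
  let X : Set (Vertex m) := {v ∈ layer m n | ¬ FixesSubtree K v}
  have hle : ristLayer m Γ n ⊓ K' ≤ ristSet Γ X :=
    ristLayer_inf_le_ristSet (Set.sep_subset _ _) fun v hv ↦
      h v (by_contra fun hfix ↦ hv.2 ⟨hv.1, hfix⟩)
  have hcomm : ⁅ristSet Γ X, ristSet Γ X⁆ ≤ K := by
    refine commutator_ristSet_le_iff.2 fun v hv w hw ↦ ?_
    obtain rfl | hvw := eq_or_ne v w
    · exact hΓ.commutator_rist_le fun hstab ↦ hv.2 (hn v hv.1 hstab)
    · exact (commutator_rist_eq_bot (hv.1.trans hw.1.symm) hvw).trans_le bot_le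
  have := hrist n
  exact factorVirtuallyAbelian_of_commutator_le ((Subgroup.commutator_mono hle hle).trans hcomm)

theorem card_le_of_not_factorVirtuallyAbelian [FaithfulSMul Γ (Vertex m)]
    (hm : ∀ n, 0 < m n) (hΓ : IsTreeAction m Γ) (hrist : ∀ n, (ristLayer m Γ n).FiniteIndex)
    (horb : ∀ n, (MulAction.orbit Γ '' layer m n).ncard ≤ r)
    {K : ℕ → Subgroup Γ} (hnorm : ∀ i, (K i).Normal) (hmono : Monotone K) {s : Finset ℕ}
    (hs : ∀ i ∈ s, ¬ FactorVirtuallyAbelian (K i) (K (i + 1))) : s.card ≤ r := by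
  have hev : ∀ i ∈ s, ∀ᶠ n in Filter.atTop, ∃ u ∈ layer m n,
      FixesSubtree (K i) u ∧ ¬ FixesSubtree (K (i + 1)) u := by
    intro i hi
    obtain ⟨v, hv, hv'⟩ : ∃ v, FixesSubtree (K i) v ∧ ¬ FixesSubtree (K (i + 1)) v := by
      by_contra! h
      exact hs i hi (factorVirtuallyAbelian_of_fixesSubtree_imp hm hΓ hrist horb h)
    filter_upwards [Filter.eventually_ge_atTop v.level] with n hn
    by_contra! h
    exact hv' (.of_forall_mem_layer hm hΓ hn fun u hu hvu ↦ h u hu (hv.of_isPrefix hvu))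
  obtain ⟨n, hn⟩ := ((Filter.eventually_all_finset s).2 hev).exists
  have : Nonempty (Vertex m) := ⟨⟨0, fun i ↦ i.elim0⟩⟩
  choose! u hu hfix hnot using hn
  have orbit_ne {i j : ℕ} (hi : i ∈ s) (hj : j ∈ s) (hij : i < j) :
      MulAction.orbit Γ (u i) ≠ MulAction.orbit Γ (u j) := fun h ↦ by
    obtain ⟨g, hg⟩ := MulAction.orbit_eq_iff.1 h
    exact hnot i hi (hg ▸ ((hfix j hj).anti (hmono hij)).smul hΓ g)
  have hinj : Set.InjOn (fun i ↦ MulAction.orbit Γ (u i)) s := fun i hi j hj h ↦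
    le_antisymm (not_lt.1 fun hji ↦ orbit_ne hj hi hji h.symm)
      (not_lt.1 fun hij ↦ orbit_ne hi hj hij h)
  calc s.card = (s : Set ℕ).ncard := (Set.ncard_coe_finset s).symm
    _ ≤ (MulAction.orbit Γ '' layer m n).ncard := Set.ncard_le_ncard_of_injOn _
      (fun i hi ↦ Set.mem_image_of_mem _ (hu i hi)) hinj ((finite_layer m n).image _)
    _ ≤ r := horb n

end BoundedOrbits

theorem IsBranchGroup.faithfulSMul (hΓ : IsBranchGroup m Γ) : FaithfulSMul Γ (Vertex m) where
  eq_of_smul_eq_smul {a b} h := inv_mul_eq_one.1 <| hΓ.faithful _ fun v ↦ by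
    rw [mul_smul, inv_smul_eq_iff, h v]

end TreeActions

theorem chain_few_nonvirtuallysolvable_factors_general
    (m : ℕ → ℕ) (hm : ∀ n, 0 < m n)
    (G : Type*) [Group G] [MulAction G (Vertex m)] (hG : IsBranchGroup m G)
    (H : Subgroup G) [H.FiniteIndex]
    (K : ℕ → Subgroup ↥H) (hnorm : ∀ i, (K i).Normal) (hmono : ∀ i, K i ≤ K (i + 1))
    (s : Finset ℕ) (hs : ∀ i ∈ s, ¬ FactorVirtuallyAbelian (K i) (K (i + 1))) :
    s.card ≤ H.index := by
  have := hG.faithfulSMul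
  have hH : IsTreeAction m H := IsTreeAction.subgroup hG.aut H
  have hrist (n : ℕ) : (ristLayer m H n).FiniteIndex :=
    finiteIndex_ristLayer_subgroup (hG.ristFiniteIndex n) H
  have horb (n : ℕ) : (MulAction.orbit H '' layer m n).ncard ≤ H.index :=
    ncard_orbit_image_le_index H fun v hv w hw ↦ hG.trans v w (hv.trans hw.symm)
  exact card_le_of_not_factorVirtuallyAbelian hm hH hrist horb hnorm
    (monotone_nat_of_le_succ hmono) hs

/-- **Lemma.** Let `G` be a branch group on `T` and `H ⊴ G` of finite index.  Then in
any ascending chain of normal subgroups of `H` there are at most `2^{|G:H|-1}` factors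
that are not virtually soluble. -/
theorem chain_few_nonvirtuallysolvable_factors
    (m : ℕ → ℕ) (hm : ∀ n, 2 ≤ m n)
    (G : Type*) [Group G] [MulAction G (Vertex m)] (hG : IsBranchGroup m G)
    (H : Subgroup G) [H.Normal] [H.FiniteIndex]
    (K : ℕ → Subgroup ↥H) (hnorm : ∀ i, (K i).Normal) (hmono : ∀ i, K i ≤ K (i + 1)) :
    ∀ s : Finset ℕ, (∀ i ∈ s, ¬ FactorVirtuallySolvable (K i) (K (i + 1))) →
      s.card ≤ 2 ^ (H.index - 1) := fun s hs ↦
  (chain_few_nonvirtuallysolvable_factors_general m (fun n ↦ two_pos.trans_le (hm n)) G hG H K hnorm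
    hmono s fun i hi h ↦ hs i hi h.factorVirtuallySolvable).trans
      (Nat.le_of_pred_lt (H.index - 1).lt_two_pow_self)
end
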